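/- There exists an absolute constant C > 0 such that for every θ ∈ (0,1) and every positive integer n, ∫_{A} G(s,t,u,v) ds dt du dv ≤ C · n^{2-θ} θ^{-1} (1-θ)^{-3}, and there exists an absolute constant c > 0 such that this integral is ≥ c · n^{2-θ} θ^{-1} (1-θ)^{-3} whenever additionally n^{1-θ} ≥ 8; here A = { (s,t,u,v) ∈ (0,∞)⁴ : 0 < u < 1, n^{-1/2} ≤ v < 1, s < n^{1/4} u^{1/2} v^{1/2}, t ≥ u^{-1/2} v^{-1/2} s }. -/

import Mathlib

open MeasureTheory Set Real

/-- The integrand `G(s,t,u,v)` from the paper's computation of the completely 1-summing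
norm of the identity `OH_n → ℓ^n_p`, with `θ = 2/p'`. Here `p = (s, t, u, v)`. -/
noncomputable def G (θ : ℝ) (n : ℕ) (p : ℝ × ℝ × ℝ × ℝ) : ℝ :=
  (n : ℝ) ^ (2 : ℕ) * p.1 ^ (-1 - 2 * θ) * p.2.1 ^ (-1 - 2 * θ) *
    min (min (min ((n : ℝ)⁻¹ * p.1 ^ (4 : ℝ) * p.2.2.1 ^ (-2 : ℝ) * p.2.2.2 ^ (-2 : ℝ))
                  ((n : ℝ)⁻¹ * p.2.1 ^ (4 : ℝ)))
             (min (p.1 ^ (4 : ℝ) * p.2.2.1 ^ (-2 : ℝ)) (p.2.1 ^ (4 : ℝ) * p.2.2.2 ^ (-2 : ℝ))))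
        (min (min (p.2.2.1 ^ (-2 : ℝ) * p.2.2.2 ^ (-2 : ℝ)) (p.2.2.1 ^ (-2 : ℝ)))
             (min 1 (p.2.2.2 ^ (-2 : ℝ))))

/-- The region of integration. -/
def A (n : ℕ) : Set (ℝ × ℝ × ℝ × ℝ) :=
  {p | 0 < p.1 ∧ 0 < p.2.1 ∧ 0 < p.2.2.1 ∧ 0 < p.2.2.2 ∧ p.2.2.1 < 1 ∧ (n : ℝ) ^ (-(1/2) : ℝ) ≤ p.2.2.2 ∧ p.2.2.2 < 1 ∧ p.1 < (n : ℝ) ^ ((1:ℝ)/4) * p.2.2.1 ^ ((1:ℝ)/2) * p.2.2.2 ^ ((1:ℝ)/2) ∧ p.2.2.1 ^ (-(1/2) : ℝ) * p.2.2.2 ^ (-(1/2) : ℝ) * p.1 ≤ p.2.1}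

/-!
On `A n` the minimum in `G` is its first term, so `G` is the product of `n` and powers of
`s, t, u, v`. Integrating in `t`, then `s`, then `v`, then `u`, each step is the integral of a
single power over an interval: the factor `θ⁻¹` comes from the integral in `t`, and the three
factors `(1 - θ)⁻¹` come from those in `s`, `v` and `u`. The outcome is an exact value for
the integral, in which the only factor left to bound is `1 - n ^ (-(1 - θ) / 2)`: it is at most `1`,
and it stays away from `0` when `n ^ (1 - θ)` stays away from `1`.
-/

section Tonelli

variable {α β γ δ : Type*} [MeasurableSpace α] [MeasurableSpace β] [MeasurableSpace γ]
  [MeasurableSpace δ] {μ : Measure α} {ν : Measure β} {ρ : Measure γ} {τ : Measure δ}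
  [SFinite μ] [SFinite ν] [SFinite ρ] [SFinite τ] {f : α × β × γ × δ → ENNReal}

lemma lintegral_prod₄_swap (hf : Measurable f) :
    ∫⁻ p, f p ∂μ.prod (ν.prod (ρ.prod τ)) =
      ∫⁻ u, ∫⁻ v, ∫⁻ s, ∫⁻ t, f (s, t, u, v) ∂ν ∂μ ∂τ ∂ρ := by
  calc ∫⁻ p, f p ∂μ.prod (ν.prod (ρ.prod τ))
      = ∫⁻ q, f (q.1.1, q.1.2, q.2) ∂(μ.prod ν).prod (ρ.prod τ) :=
        ((measurePreserving_prodAssoc μ ν (ρ.prod τ)).lintegral_comp hf).symm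
    _ = ∫⁻ w, ∫⁻ z, f (z.1, z.2, w) ∂μ.prod ν ∂ρ.prod τ := lintegral_prod_symm' _ (by fun_prop)
    _ = ∫⁻ u, ∫⁻ v, ∫⁻ z, f (z.1, z.2, u, v) ∂μ.prod ν ∂τ ∂ρ :=
        lintegral_prod _ <| Measurable.aemeasurable <|
          (show Measurable fun q : (α × β) × γ × δ ↦ f (q.1.1, q.1.2, q.2) by
            fun_prop).lintegral_prod_left'
    _ = ∫⁻ u, ∫⁻ v, ∫⁻ s, ∫⁻ t, f (s, t, u, v) ∂ν ∂μ ∂τ ∂ρ :=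
        lintegral_congr fun _ ↦ lintegral_congr fun _ ↦ lintegral_prod _ (by fun_prop)

lemma setLIntegral_prod₄_of_mem_iff {E : Set (α × β × γ × δ)} {U : Set γ} {V : γ → Set δ}
    {S : γ → δ → Set α} {T : γ → δ → α → Set β} (hE : MeasurableSet E) (hU : MeasurableSet U)
    (hV : ∀ u, MeasurableSet (V u)) (hS : ∀ u v, MeasurableSet (S u v))
    (hT : ∀ u v s, MeasurableSet (T u v s))
    (mem_E : ∀ s t u v, (s, t, u, v) ∈ E ↔ u ∈ U ∧ v ∈ V u ∧ s ∈ S u v ∧ t ∈ T u v s)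
    (hf : Measurable f) :
    ∫⁻ p in E, f p ∂μ.prod (ν.prod (ρ.prod τ)) =
      ∫⁻ u in U, ∫⁻ v in V u, ∫⁻ s in S u v, ∫⁻ t in T u v s, f (s, t, u, v) ∂ν ∂μ ∂τ ∂ρ := by
  rw [← lintegral_indicator hE, lintegral_prod₄_swap (hf.indicator hE), ← lintegral_indicator hU]
  refine lintegral_congr fun u ↦ ?_
  by_cases hu : u ∈ U
  swap; · simp [indicator, mem_E, hu]
  rw [indicator_of_mem hu, ← lintegral_indicator (hV u)]
  refine lintegral_congr fun v ↦ ?_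
  by_cases hv : v ∈ V u
  swap; · simp [indicator, mem_E, hv]
  rw [indicator_of_mem hv, ← lintegral_indicator (hS u v)]
  refine lintegral_congr fun s ↦ ?_
  by_cases hs : s ∈ S u v
  swap; · simp [indicator, mem_E, hs]
  rw [indicator_of_mem hs, ← lintegral_indicator (hT u v s)]
  refine lintegral_congr fun t ↦ ?_
  by_cases ht : t ∈ T u v s <;> simp [indicator, mem_E, hu, hv, hs, ht]

end Tonelli

section PowerIntegrals

variable {K r : ℝ}

lemma setLIntegral_Ici_const_mul_rpow {c : ℝ} (hK : 0 ≤ K) (hr : r < -1) (hc : 0 < c) :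
    ∫⁻ x in Ici c, ENNReal.ofReal (K * x ^ r) =
      ENNReal.ofReal (K * (-c ^ (r + 1) / (r + 1))) := by
  rw [setLIntegral_congr Ioi_ae_eq_Ici.symm, ← integral_Ioi_rpow_of_lt hr hc,
    ← integral_const_mul,
    ofReal_integral_eq_lintegral_ofReal ((integrableOn_Ioi_rpow_of_lt hr hc).const_mul K)]
  filter_upwards [ae_restrict_mem measurableSet_Ioi] with x hx
  exact mul_nonneg hK (rpow_nonneg (hc.trans hx).le r)

lemma setLIntegral_const_mul_rpow_of_ae_eq_Ioc {a b : ℝ} {I : Set ℝ} (hK : 0 ≤ K) (hr : -1 < r)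
    (ha : 0 ≤ a) (hab : a ≤ b) (hI : I =ᵐ[volume] Ioc a b) :
    ∫⁻ x in I, ENNReal.ofReal (K * x ^ r) =
      ENNReal.ofReal (K * ((b ^ (r + 1) - a ^ (r + 1)) / (r + 1))) := by
  have integrable : IntegrableOn (fun x : ℝ ↦ x ^ r) (Ioc a b) :=
    (intervalIntegrable_iff_integrableOn_Ioc_of_le hab).1
      (intervalIntegral.intervalIntegrable_rpow' hr)
  rw [setLIntegral_congr hI, ← integral_rpow (Or.inl hr), intervalIntegral.integral_of_le hab,
    ← integral_const_mul, ofReal_integral_eq_lintegral_ofReal (integrable.const_mul K)]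
  filter_upwards [ae_restrict_mem measurableSet_Ioc] with x hx
  exact mul_nonneg hK (rpow_nonneg (ha.trans hx.1.le) r)

end PowerIntegrals

/-- The upper limit `n^{1/4} u^{1/2} v^{1/2}` for the variable `s` in the region `A n`. -/
noncomputable def sMax (n : ℕ) (u v : ℝ) : ℝ :=
  (n : ℝ) ^ ((1 : ℝ) / 4) * u ^ ((1 : ℝ) / 2) * v ^ ((1 : ℝ) / 2)

/-- The lower limit `u^{-1/2} v^{-1/2} s` for the variable `t` in the region `A n`. -/
noncomputable def tMin (u v s : ℝ) : ℝ :=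
  u ^ (-(1 / 2) : ℝ) * v ^ (-(1 / 2) : ℝ) * s

section Limits

variable {n : ℕ} {s u v : ℝ}

lemma sMax_pos (hn : 0 < n) (hu : 0 < u) (hv : 0 < v) : 0 < sMax n u v := by
  unfold sMax
  positivity

lemma tMin_pos (hu : 0 < u) (hv : 0 < v) (hs : 0 < s) : 0 < tMin u v s := by
  unfold tMin
  positivity

lemma sMax_rpow (n : ℕ) (hu : 0 ≤ u) (hv : 0 ≤ v) (r : ℝ) :
    sMax n u v ^ r = (n : ℝ) ^ (r / 4) * u ^ (r / 2) * v ^ (r / 2) := by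
  rw [sMax, mul_rpow (by positivity) (by positivity), mul_rpow (by positivity) (by positivity),
    ← rpow_mul n.cast_nonneg, ← rpow_mul hu, ← rpow_mul hv]
  ring_nf

lemma tMin_rpow (hu : 0 ≤ u) (hv : 0 ≤ v) (hs : 0 ≤ s) (r : ℝ) :
    tMin u v s ^ r = u ^ (-r / 2) * v ^ (-r / 2) * s ^ r := by
  rw [tMin, mul_rpow (by positivity) hs, mul_rpow (by positivity) (by positivity),
    ← rpow_mul hu, ← rpow_mul hv]
  ring_nf

end Limits

section Region

variable {n : ℕ} {s t u v : ℝ}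

lemma measurableSet_A (n : ℕ) : MeasurableSet (A n) := by
  unfold A
  measurability

lemma pos_of_natCast_rpow_le {r : ℝ} (hn : 0 < n) (hv : (n : ℝ) ^ r ≤ v) : 0 < v :=
  (rpow_pos_of_pos (Nat.cast_pos.2 hn) r).trans_le hv

lemma mem_A_iff (hn : 0 < n) :
    (s, t, u, v) ∈ A n ↔
      u ∈ Ioo 0 1 ∧ v ∈ Ico ((n : ℝ) ^ (-(1 / 2) : ℝ)) 1 ∧
        s ∈ Ioo 0 (sMax n u v) ∧ t ∈ Ici (tMin u v s) := by
  constructor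
  · rintro ⟨hs, -, hu, -, hu1, hv, hv1, hsMax, htMin⟩
    exact ⟨⟨hu, hu1⟩, ⟨hv, hv1⟩, ⟨hs, hsMax⟩, htMin⟩
  · rintro ⟨hu, hv, hs, ht⟩
    have hv0 := pos_of_natCast_rpow_le hn hv.1
    exact ⟨hs.1, (tMin_pos hu.1 hv0 hs.1).trans_le ht, hu.1, hv0, hu.2, hv.1, hv.2, hs.2, ht⟩

end Region

section Integrand

variable {θ : ℝ} {n : ℕ} {s t u v : ℝ}

lemma measurable_G (θ : ℝ) (n : ℕ) : Measurable (G θ n) := by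
  unfold G
  fun_prop

lemma min_eq_first_term {m a b U V : ℝ} (hm : 0 ≤ m) (ha : 0 ≤ a) (hm1 : m ≤ 1) (hU : 1 ≤ U)
    (hV : 1 ≤ V) (hmV : m * V ≤ 1) (hab : a * U * V ≤ b) (hmaUV : m * a * U * V ≤ 1) :
    min (min (min (m * a * U * V) (m * b)) (min (a * U) (b * V)))
      (min (min (U * V) U) (min 1 V)) = m * a * U * V := by
  have hb : 0 ≤ b := le_trans (by positivity) hab
  have le_mb : m * a * U * V ≤ m * b := by
    linarith [mul_le_mul_of_nonneg_left hab hm]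
  have le_aU : m * a * U * V ≤ a * U := by
    linarith [mul_le_mul_of_nonneg_left hmV (by positivity : 0 ≤ a * U)]
  have le_bV : m * b ≤ b * V := by
    rw [mul_comm]
    exact mul_le_mul_of_nonneg_left (hm1.trans hV) hb
  have one_le_UV : 1 ≤ U * V := one_le_mul_of_one_le_of_one_le hU hV
  rw [min_eq_left le_mb, min_eq_left (le_min le_aU (le_mb.trans le_bV)), min_eq_left]
  exact le_min (le_min (hmaUV.trans one_le_UV) (hmaUV.trans hU))
    (le_min hmaUV (hmaUV.trans hV))

lemma inv_mul_rpow_neg_two_le_one (hn : 0 < n) (hv : (n : ℝ) ^ (-(1 / 2) : ℝ) ≤ v) :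
    (n : ℝ)⁻¹ * v ^ (-2 : ℝ) ≤ 1 := by
  have hn0 : (0 : ℝ) < n := Nat.cast_pos.2 hn
  rw [inv_mul_le_one₀ hn0]
  calc v ^ (-2 : ℝ) ≤ ((n : ℝ) ^ (-(1 / 2) : ℝ)) ^ (-2 : ℝ) :=
        rpow_le_rpow_of_nonpos (by positivity) hv (by norm_num)
    _ = n := by rw [← rpow_mul hn0.le]; norm_num

lemma mul_rpow_neg_two_le_of_tMin_le (hu : 0 ≤ u) (hv : 0 ≤ v) (hs : 0 ≤ s)
    (ht : tMin u v s ≤ t) : s ^ (4 : ℝ) * u ^ (-2 : ℝ) * v ^ (-2 : ℝ) ≤ t ^ (4 : ℝ) := by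
  have tMin_nonneg : 0 ≤ tMin u v s := by unfold tMin; positivity
  calc s ^ (4 : ℝ) * u ^ (-2 : ℝ) * v ^ (-2 : ℝ) = tMin u v s ^ (4 : ℝ) := by
        rw [tMin_rpow hu hv hs]; ring_nf
    _ ≤ t ^ (4 : ℝ) := rpow_le_rpow tMin_nonneg ht (by norm_num)

lemma mul_rpow_neg_two_le_one_of_le_sMax (hn : 0 < n) (hu : 0 < u) (hv : 0 < v) (hs : 0 ≤ s)
    (hs' : s ≤ sMax n u v) : (n : ℝ)⁻¹ * s ^ (4 : ℝ) * u ^ (-2 : ℝ) * v ^ (-2 : ℝ) ≤ 1 := by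
  calc (n : ℝ)⁻¹ * s ^ (4 : ℝ) * u ^ (-2 : ℝ) * v ^ (-2 : ℝ)
      ≤ (n : ℝ)⁻¹ * sMax n u v ^ (4 : ℝ) * u ^ (-2 : ℝ) * v ^ (-2 : ℝ) := by gcongr
    _ = 1 := by
        rw [sMax_rpow n hu.le hv.le, rpow_neg hu.le, rpow_neg hv.le]
        norm_num
        field_simp

lemma G_eq_of_mem_A (hn : 0 < n) (h : (s, t, u, v) ∈ A n) :
    G θ n (s, t, u, v) =
      n * s ^ (3 - 2 * θ) * u ^ (-2 : ℝ) * v ^ (-2 : ℝ) * t ^ (-1 - 2 * θ) := by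
  obtain ⟨hu, hv, hs, ht⟩ := (mem_A_iff hn).1 h
  have hv0 := pos_of_natCast_rpow_le hn hv.1
  have one_le_rpow {x : ℝ} (hx : 0 < x) (hx1 : x < 1) : 1 ≤ x ^ (-2 : ℝ) :=
    one_le_rpow_of_pos_of_le_one_of_nonpos hx hx1.le (by norm_num)
  dsimp only [G]
  rw [min_eq_first_term (by positivity) (rpow_nonneg hs.1.le _) (Nat.cast_inv_le_one n)
    (one_le_rpow hu.1 hu.2) (one_le_rpow hv0 hv.2) (inv_mul_rpow_neg_two_le_one hn hv.1)
    (mul_rpow_neg_two_le_of_tMin_le hu.1.le hv0.le hs.1.le ht)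
    (mul_rpow_neg_two_le_one_of_le_sMax hn hu.1 hv0 hs.1.le hs.2.le),
    show 3 - 2 * θ = -1 - 2 * θ + 4 by ring, rpow_add hs.1]
  field_simp

end Integrand

section IteratedIntegral

variable {θ : ℝ} {n : ℕ} {s u v : ℝ}

lemma setLIntegral_G_Ici_tMin (hθ : 0 < θ) (hn : 0 < n) (hu : u ∈ Ioo 0 1)
    (hv : v ∈ Ico ((n : ℝ) ^ (-(1 / 2) : ℝ)) 1) (hs : s ∈ Ioo 0 (sMax n u v)) :
    ∫⁻ t in Ici (tMin u v s), ENNReal.ofReal (G θ n (s, t, u, v)) =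
      ENNReal.ofReal (n / (2 * θ) * u ^ (θ - 2) * v ^ (θ - 2) * s ^ (3 - 4 * θ)) := by
  have hu0 := hu.1
  have hs0 := hs.1
  have hv0 := pos_of_natCast_rpow_le hn hv.1
  have G_eq : EqOn (fun t ↦ ENNReal.ofReal (G θ n (s, t, u, v)))
      (fun t ↦ ENNReal.ofReal
        (n * s ^ (3 - 2 * θ) * u ^ (-2 : ℝ) * v ^ (-2 : ℝ) * t ^ (-1 - 2 * θ)))
      (Ici (tMin u v s)) := fun t ht ↦ by
    dsimp only
    rw [G_eq_of_mem_A hn ((mem_A_iff hn).2 ⟨hu, hv, hs, ht⟩)]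
  rw [setLIntegral_congr_fun measurableSet_Ici G_eq,
    setLIntegral_Ici_const_mul_rpow (by positivity) (by linarith) (tMin_pos hu0 hv0 hs0),
    show -1 - 2 * θ + 1 = -(2 * θ) by ring, tMin_rpow hu0.le hv0.le hs0.le,
    show -(-(2 * θ)) / 2 = θ by ring, show θ - 2 = -2 + θ by ring, rpow_add hu0, rpow_add hv0,
    show 3 - 4 * θ = (3 - 2 * θ) + -(2 * θ) by ring, rpow_add hs0, neg_div_neg_eq]
  ring_nf

lemma setLIntegral_Ioo_sMax (hθ : 0 < θ) (hθ1 : θ < 1) (hn : 0 < n) (hu : 0 < u) (hv : 0 < v) :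
    ∫⁻ s in Ioo 0 (sMax n u v),
        ENNReal.ofReal (n / (2 * θ) * u ^ (θ - 2) * v ^ (θ - 2) * s ^ (3 - 4 * θ)) =
      ENNReal.ofReal (n ^ (2 - θ) / (8 * θ * (1 - θ)) * u ^ (-θ) * v ^ (-θ)) := by
  have hn0 : (0 : ℝ) < n := Nat.cast_pos.2 hn
  have h1θ : 0 < 1 - θ := sub_pos.2 hθ1
  rw [setLIntegral_const_mul_rpow_of_ae_eq_Ioc (by positivity) (by linarith) le_rfl
      (sMax_pos hn hu hv).le Ioo_ae_eq_Ioc,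
    show 3 - 4 * θ + 1 = 4 * (1 - θ) by ring, zero_rpow (by positivity), sub_zero,
    sMax_rpow n hu.le hv.le, show 4 * (1 - θ) / 4 = 1 - θ by ring,
    show 2 - θ = 1 + (1 - θ) by ring, rpow_add hn0, rpow_one,
    show -θ = (θ - 2) + 4 * (1 - θ) / 2 by ring, rpow_add hu, rpow_add hv]
  congr 1
  field_simp
  ring

lemma setLIntegral_G_A_eq_iterated (hθ : 0 < θ) (hθ1 : θ < 1) (hn : 0 < n) :
    ∫⁻ p in A n, ENNReal.ofReal (G θ n p) =
      ∫⁻ u in Ioo 0 1, ∫⁻ v in Ico ((n : ℝ) ^ (-(1 / 2) : ℝ)) 1,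
        ENNReal.ofReal (n ^ (2 - θ) / (8 * θ * (1 - θ)) * u ^ (-θ) * v ^ (-θ)) :=
  calc ∫⁻ p in A n, ENNReal.ofReal (G θ n p)
      = ∫⁻ u in Ioo 0 1, ∫⁻ v in Ico ((n : ℝ) ^ (-(1 / 2) : ℝ)) 1, ∫⁻ s in Ioo 0 (sMax n u v),
          ∫⁻ t in Ici (tMin u v s), ENNReal.ofReal (G θ n (s, t, u, v)) :=
        setLIntegral_prod₄_of_mem_iff (measurableSet_A n) measurableSet_Ioo
          (fun _ ↦ measurableSet_Ico) (fun _ _ ↦ measurableSet_Ioo)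
          (fun _ _ _ ↦ measurableSet_Ici) (fun _ _ _ _ ↦ mem_A_iff hn)
          (measurable_G θ n).ennreal_ofReal
    _ = ∫⁻ u in Ioo 0 1, ∫⁻ v in Ico ((n : ℝ) ^ (-(1 / 2) : ℝ)) 1,
          ENNReal.ofReal (n ^ (2 - θ) / (8 * θ * (1 - θ)) * u ^ (-θ) * v ^ (-θ)) :=
        setLIntegral_congr_fun measurableSet_Ioo fun _ hu ↦
          setLIntegral_congr_fun measurableSet_Ico fun _ hv ↦
            (setLIntegral_congr_fun measurableSet_Ioo fun _ hs ↦
              setLIntegral_G_Ici_tMin hθ hn hu hv hs).trans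
              (setLIntegral_Ioo_sMax hθ hθ1 hn hu.1 (pos_of_natCast_rpow_le hn hv.1))

lemma natCast_rpow_one_sub_rpow_neg_half_le_one (hθ : θ ≤ 1) (hn : 0 < n) :
    ((n : ℝ) ^ (1 - θ)) ^ (-(1 / 2) : ℝ) ≤ 1 :=
  rpow_le_one_of_one_le_of_nonpos
    (one_le_rpow (Nat.one_le_cast.2 hn) (sub_nonneg.2 hθ)) (by norm_num)

lemma setLIntegral_G_A (hθ : 0 < θ) (hθ1 : θ < 1) (hn : 0 < n) :
    ∫⁻ p in A n, ENNReal.ofReal (G θ n p) =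
      ENNReal.ofReal (n ^ (2 - θ) / (8 * θ * (1 - θ) ^ 3) *
        (1 - ((n : ℝ) ^ (1 - θ)) ^ (-(1 / 2) : ℝ))) := by
  have h1θ : 0 < 1 - θ := sub_pos.2 hθ1
  have hn1 : (n : ℝ) ^ (-(1 / 2) : ℝ) ≤ 1 :=
    rpow_le_one_of_one_le_of_nonpos (Nat.one_le_cast.2 hn) (by norm_num)
  have rpow_swap : ((n : ℝ) ^ (-(1 / 2) : ℝ)) ^ (1 - θ) = ((n : ℝ) ^ (1 - θ)) ^ (-(1 / 2) : ℝ) := by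
    rw [← rpow_mul n.cast_nonneg, ← rpow_mul n.cast_nonneg, mul_comm]
  set c : ℝ := n ^ (2 - θ) / (8 * θ * (1 - θ)) with hc
  set d : ℝ := (1 - ((n : ℝ) ^ (1 - θ)) ^ (-(1 / 2) : ℝ)) / (1 - θ) with hd
  have hd0 : 0 ≤ d :=
    div_nonneg (sub_nonneg.2 (natCast_rpow_one_sub_rpow_neg_half_le_one hθ1.le hn)) h1θ.le
  calc ∫⁻ p in A n, ENNReal.ofReal (G θ n p)
      = ∫⁻ u in Ioo 0 1, ∫⁻ v in Ico ((n : ℝ) ^ (-(1 / 2) : ℝ)) 1,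
          ENNReal.ofReal (c * u ^ (-θ) * v ^ (-θ)) := setLIntegral_G_A_eq_iterated hθ hθ1 hn
    _ = ∫⁻ u in Ioo 0 1, ENNReal.ofReal (c * d * u ^ (-θ)) :=
        setLIntegral_congr_fun measurableSet_Ioo fun u hu ↦ by
          have hu0 := hu.1
          rw [setLIntegral_const_mul_rpow_of_ae_eq_Ioc (by positivity) (by linarith)
            (by positivity) hn1 Ico_ae_eq_Ioc, one_rpow, neg_add_eq_sub,
            rpow_swap, ← hd, mul_right_comm]
    _ = ENNReal.ofReal (c * d / (1 - θ)) := by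
        rw [setLIntegral_const_mul_rpow_of_ae_eq_Ioc (by positivity) (by linarith) le_rfl
          zero_le_one Ioo_ae_eq_Ioc, neg_add_eq_sub, one_rpow, zero_rpow h1θ.ne', sub_zero,
          mul_one_div]
    _ = ENNReal.ofReal (n ^ (2 - θ) / (8 * θ * (1 - θ) ^ 3) *
          (1 - ((n : ℝ) ^ (1 - θ)) ^ (-(1 / 2) : ℝ))) := by
        rw [hc, hd]
        field_simp

lemma setIntegral_G_A (hθ : 0 < θ) (hθ1 : θ < 1) (hn : 0 < n) :
    ∫ p in A n, G θ n p =
      (1 - ((n : ℝ) ^ (1 - θ)) ^ (-(1 / 2) : ℝ)) / 8 *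
        ((n : ℝ) ^ (2 - θ) * θ ^ (-1 : ℝ) * (1 - θ) ^ (-3 : ℝ)) := by
  have h1θ : 0 < 1 - θ := sub_pos.2 hθ1
  have G_nonneg : 0 ≤ᵐ[volume.restrict (A n)] G θ n := by
    filter_upwards [ae_restrict_mem (measurableSet_A n)] with ⟨s, t, u, v⟩ hp
    rw [Pi.zero_apply, G_eq_of_mem_A hn hp]
    obtain ⟨hs, ht, hu, hv, -⟩ : 0 < s ∧ 0 < t ∧ 0 < u ∧ 0 < v ∧ _ := hp
    positivity
  rw [integral_eq_lintegral_of_nonneg_ae G_nonneg (measurable_G θ n).aestronglyMeasurable,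
    setLIntegral_G_A hθ hθ1 hn,
    ENNReal.toReal_ofReal
      (mul_nonneg (by positivity)
        (sub_nonneg.2 (natCast_rpow_one_sub_rpow_neg_half_le_one hθ1.le hn))),
    rpow_neg_one, rpow_neg h1θ.le, show (1 - θ) ^ (3 : ℝ) = (1 - θ) ^ 3 by norm_cast]
  field_simp

end IteratedIntegral

lemma rpow_neg_half_le_half {x : ℝ} (hx : 4 ≤ x) : x ^ (-(1 / 2) : ℝ) ≤ 1 / 2 :=
  calc x ^ (-(1 / 2) : ℝ) ≤ 4 ^ (-(1 / 2) : ℝ) :=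
        rpow_le_rpow_of_nonpos (by norm_num) hx (by norm_num)
    _ = ((2 : ℝ) ^ (2 : ℝ)) ^ (-(1 / 2) : ℝ) := by norm_num
    _ = 1 / 2 := by
      rw [← rpow_mul zero_le_two]
      norm_num

theorem stmt_8 :
    (∃ C : ℝ, 0 < C ∧ ∀ θ : ℝ, 0 < θ → θ < 1 → ∀ n : ℕ, 0 < n →
      (∫ p in A n, G θ n p) ≤ C * ((n : ℝ) ^ (2 - θ) * θ ^ (-1 : ℝ) * (1 - θ) ^ (-3 : ℝ))) ∧
    (∃ c : ℝ, 0 < c ∧ ∀ θ : ℝ, 0 < θ → θ < 1 → ∀ n : ℕ, 0 < n →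
      (8 : ℝ) ≤ (n : ℝ) ^ (1 - θ) →
      c * ((n : ℝ) ^ (2 - θ) * θ ^ (-1 : ℝ) * (1 - θ) ^ (-3 : ℝ)) ≤ ∫ p in A n, G θ n p) := by
  refine ⟨⟨1 / 8, by norm_num, fun θ hθ hθ1 n hn ↦ ?_⟩,
    ⟨1 / 16, by norm_num, fun θ hθ hθ1 n hn h8 ↦ ?_⟩⟩
  all_goals
    have := sub_pos.2 hθ1
    rw [setIntegral_G_A hθ hθ1 hn]
    refine mul_le_mul_of_nonneg_right ?_ (by positivity)
  · have : 0 ≤ ((n : ℝ) ^ (1 - θ)) ^ (-(1 / 2) : ℝ) := by positivity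
    linarith
  · linarith [rpow_neg_half_le_half (le_trans (by norm_num) h8)]
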